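/- Let 0 < ε < δ ≤ 1. Let F_1,…,F_k : {±1}^n → [−1,1] be functions depending on pairwise disjoint sets of input variables such that each F_i is δ-fooled by every ε-biased distribution (i.e., |E_{x∼D}[F_i(x)] − E_{x∼U_n}[F_i(x)]| ≤ δ for every ε-biased D). Let H : [−1,1]^k → [−1,1] be multilinear in its inputs. Then the function x ↦ H(F_1(x),…,F_k(x)) is (16^k·2δ)-fooled by every ε^k-biased distribution. -/

import Mathlib

open Finset

/-- Uniform-distribution expectation of `f` over a finite type. -/
noncomputable def uexp {α : Type*} [Fintype α] (f : α → ℝ) : ℝ :=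
  (∑ x : α, f x) / (Fintype.card α : ℝ)

/-- Variance under the uniform distribution. -/
noncomputable def uvar {α : Type*} [Fintype α] (f : α → ℝ) : ℝ :=
  uexp (fun x => f x ^ 2) - (uexp f) ^ 2

open Classical in
/-- Real-valued indicator of a proposition. -/
noncomputable def ind (P : Prop) : ℝ := if P then 1 else 0

/-- `sel T x y` agrees with `x` on `T` and with `y` outside of `T`. -/
def sel {n : ℕ} (T : Finset (Fin n)) (x y : Fin n → Bool) : Fin n → Bool :=
  fun i => if i ∈ T then x i else y i

/-- The bias function of `f` with respect to the set `T` of live coordinates. -/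
noncomputable def biasFn {n : ℕ} (T : Finset (Fin n)) (f : (Fin n → Bool) → ℝ) :
    (Fin n → Bool) → ℝ :=
  fun x => uexp (fun y : Fin n → Bool => f (sel T x y))

/-- A layered read-once branching program of width `w` and length `n`.
`V i` is the set of vertices of layer `i`; the Boolean `true` corresponds to the
edge label `1` and `false` to the edge label `-1`; the program outputs `-1` iff it
accepts. -/
structure ROBP (w n : ℕ) where
  V : Fin (n + 1) → Finset (Fin w)
  V_nonempty : ∀ i, (V i).Nonempty
  start : Fin w
  start_mem : start ∈ V 0
  trans : Fin n → Bool → Fin w → Fin w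
  trans_mem : ∀ (i : Fin n) (b : Bool) (v : Fin w), v ∈ V i.castSucc → trans i b v ∈ V i.succ
  accept : Fin w → Bool

namespace ROBP

variable {w n : ℕ}

/-- The state reached at layer `j` when starting from state `v` at layer `i`. -/
def runTo (B : ROBP w n) (x : Fin n → Bool) (v : Fin w) (i j : ℕ) : Fin w :=
  if h : i < j ∧ i < n then runTo B x (B.trans ⟨i, h.2⟩ (x ⟨i, h.2⟩) v) (i + 1) j else v
termination_by j - i
decreasing_by omega

/-- The final state on input `x`, starting from the start vertex. -/
def run (B : ROBP w n) (x : Fin n → Bool) : Fin w := B.runTo x B.start 0 n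

/-- The `±1` value computed by `B` on `x` (`-1` means accept). -/
noncomputable def eval (B : ROBP w n) (x : Fin n → Bool) : ℝ :=
  if B.accept (B.run x) then -1 else 1

/-- Probability (over a uniformly random input) of reaching vertex `v` at layer `j`. -/
noncomputable def reachProb (B : ROBP w n) (j : ℕ) (v : Fin w) : ℝ :=
  uexp (fun x : Fin n → Bool => if B.runTo x B.start 0 j = v then (1 : ℝ) else 0)

/-- Acceptance probability starting from vertex `v` at layer `i`, on a uniform input. -/
noncomputable def beta (B : ROBP w n) (i : ℕ) (v : Fin w) : ℝ :=
  uexp (fun x : Fin n → Bool => if B.accept (B.runTo x v i n) then (1 : ℝ) else 0)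

/-- Layer `i` of edges is colliding: two distinct vertices of layer `i` have
equally-labeled edges entering the same vertex of layer `i+1`. -/
def Colliding (B : ROBP w n) (i : Fin n) : Prop :=
  ∃ (b : Bool) (u v : Fin w), u ∈ B.V i.castSucc ∧ v ∈ B.V i.castSucc ∧ u ≠ v ∧
    B.trans i b u = B.trans i b v

/-- The number of colliding layers of `B`. -/
noncomputable def collidingCount (B : ROBP w n) : ℕ :=
  Nat.card {i : Fin n // B.Colliding i}

/-- The value of `B` on `x` when all vertices of `V 0` are interpreted as start
vertices: the average of the `±1` outcomes of the corresponding computation paths. -/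
noncomputable def avgEval (B : ROBP w n) (x : Fin n → Bool) : ℝ :=
  (∑ v ∈ B.V 0, (if B.accept (B.runTo x v 0 n) then (-1 : ℝ) else 1)) / ((B.V 0).card : ℝ)

/-- The averaged value of the suffix of `B` starting at layer `t`, whose start-vertex
set is `V t`. -/
noncomputable def suffixEval (B : ROBP w n) (t : Fin (n + 1)) (x : Fin n → Bool) : ℝ :=
  (∑ v ∈ B.V t, (if B.accept (B.runTo x v (t : ℕ) n) then (-1 : ℝ) else 1)) /
    ((B.V t).card : ℝ)

/-- `B` is a `(w, ℓ, m)`-ROBP: it can be written as a concatenation of `m` consecutive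
blocks, each block boundary layer having at most `2` vertices and each block having at
most `ℓ` colliding layers. -/
def IsDecomp (B : ROBP w n) (ℓ m : ℕ) : Prop :=
  ∃ cut : Fin (m + 1) → Fin (n + 1),
    Monotone cut ∧ cut 0 = 0 ∧ cut (Fin.last m) = Fin.last n ∧
    (∀ j, (B.V (cut j)).card ≤ 2) ∧
    (∀ j : Fin m,
      Nat.card {i : Fin n //
        (cut j.castSucc : ℕ) ≤ (i : ℕ) ∧ (i : ℕ) < (cut j.succ : ℕ) ∧ B.Colliding i} ≤ ℓ)

end ROBP

/-- `G` is a pseudorandom generator that `ε`-fools the real-valued function `f`. -/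
def fools {r n : ℕ} (G : (Fin r → Bool) → (Fin n → Bool)) (f : (Fin n → Bool) → ℝ)
    (ε : ℝ) : Prop :=
  |uexp f - uexp (fun s => f (G s))| ≤ ε

/-- Expectation of `f` under the distribution with mass function `μ`. -/
noncomputable def dExp {α : Type*} [Fintype α] (μ f : α → ℝ) : ℝ :=
  ∑ x : α, μ x * f x

/-- `f` depends only on the coordinates in `S`. -/
def DependsOnlyOn {n : ℕ} (f : (Fin n → Bool) → ℝ) (S : Finset (Fin n)) : Prop :=
  ∀ x y, (∀ j ∈ S, x j = y j) → f x = f y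

/-- The `±1` encoding of a bit (`true ↦ 1`, `false ↦ -1`). -/
def chi (b : Bool) : ℝ := if b then 1 else -1

/-- `μ` is (the mass function of) a `δ`-biased distribution on `{±1}^n`. -/
def IsBiased {n : ℕ} (μ : (Fin n → Bool) → ℝ) (δ : ℝ) : Prop :=
  (∀ x, 0 ≤ μ x) ∧ (∑ x : Fin n → Bool, μ x = 1) ∧
  ∀ S : Finset (Fin n), S.Nonempty →
    |∑ x : Fin n → Bool, μ x * ∏ i ∈ S, chi (x i)| ≤ δ

/-!
Expand the multilinear `H` by interpolation from the vertices of the cube. This writes `H(F(x))` as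
`∑ s, H(s) w(x, s)` over sign patterns `s`, with weights `w(x, s) = ∏ i, (1 + s i * F i x) / 2` that
are nonnegative and sum to `1`.

By linear programming duality, a function `f` has expectation at most `c` under every `ε`-biased
distribution exactly when, for every `c' > c`, it lies below a Walsh polynomial `∑ T, a T * χ_T` of
cost `a ∅ + ∑ T ≠ ∅, ε * |a T|` at most `c'`. For such polynomials in `k` disjoint sets of
variables, with `a ∅ ≥ 0`, the product of the costs bounds the expectation of the product under
every `ε ^ k`-biased distribution: a product of `m ≤ k` nontrivial characters in disjoint variables
is a nontrivial character if `m ≥ 1`, and the product of the costs charges it `ε ^ m`.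

Hence `w(·, s)` has expectation at most `q s = ∏ i, (1 + s i * E[F i] + δ i) / 2` under every
`ε ^ k`-biased distribution, the uniform one included. As the `q s` sum to `∏ i, (1 + δ i)` and the
expected weights sum to `1`, any two such distributions give families of expected weights at
`ℓ¹`-distance at most `2 * (∏ i, (1 + δ i) - 1)`.
-/

section Expectation

variable {α : Type*} [Fintype α]

lemma dExp_sum_const_mul {β : Type*} (s : Finset β) (μ : α → ℝ) (c : β → ℝ) (f : β → α → ℝ) :
    dExp μ (fun x => ∑ j ∈ s, c j * f j x) = ∑ j ∈ s, c j * dExp μ (f j) := by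
  simp only [dExp, mul_sum]
  rw [sum_comm]
  exact sum_congr rfl fun j _ => sum_congr rfl fun x _ => mul_left_comm _ _ _

lemma dExp_mono {μ f g : α → ℝ} (hμ : ∀ x, 0 ≤ μ x) (hfg : ∀ x, f x ≤ g x) :
    dExp μ f ≤ dExp μ g :=
  sum_le_sum fun x _ => mul_le_mul_of_nonneg_left (hfg x) (hμ x)

lemma dExp_const_add_const_mul {μ : α → ℝ} (hμ : ∑ x, μ x = 1) (b c : ℝ) (f : α → ℝ) :
    dExp μ (fun x => b + c * f x) = b + c * dExp μ f := by
  simp only [dExp, mul_add, sum_add_distrib, ← sum_mul, hμ, one_mul, mul_sum, mul_left_comm]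

/-- The mass function of the uniform distribution on a finite type; see `dExp_uniformMass` for the
comparison with `uexp`. -/
noncomputable def uniformMass (α : Type*) [Fintype α] : α → ℝ :=
  fun _ => (Fintype.card α : ℝ)⁻¹

lemma dExp_uniformMass (f : α → ℝ) : dExp (uniformMass α) f = uexp f := by
  simp only [dExp, uniformMass, uexp, ← mul_sum, div_eq_inv_mul]

lemma sum_uniformMass [Nonempty α] : ∑ x, uniformMass α x = 1 := by
  simp [uniformMass]

lemma uexp_mono {f g : α → ℝ} (hfg : ∀ x, f x ≤ g x) : uexp f ≤ uexp g :=
  div_le_div_of_nonneg_right (sum_le_sum fun x _ => hfg x) (Nat.cast_nonneg _)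

lemma uexp_const [Nonempty α] (c : ℝ) : uexp (fun _ : α => c) = c := by
  simp [uexp]

lemma uexp_sum_const_mul {β : Type*} (s : Finset β) (c : β → ℝ) (f : β → α → ℝ) :
    uexp (fun x => ∑ j ∈ s, c j * f j x) = ∑ j ∈ s, c j * uexp (f j) := by
  simp only [← dExp_uniformMass, dExp_sum_const_mul]

end Expectation

section Walsh

variable {n : ℕ}

/-- The Walsh character `χ_T(x) = ∏ i ∈ T, x i` on the cube `{±1}^n`. -/
noncomputable def walsh (T : Finset (Fin n)) (x : Fin n → Bool) : ℝ :=
  ∏ i ∈ T, chi (x i)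

lemma abs_chi (b : Bool) : |chi b| = 1 := by
  cases b <;> simp [chi]

lemma abs_walsh (T : Finset (Fin n)) (x : Fin n → Bool) : |walsh T x| = 1 := by
  simp [walsh, abs_prod, abs_chi]

lemma walsh_empty (x : Fin n → Bool) : walsh ∅ x = 1 :=
  prod_empty

lemma prod_walsh_of_pairwise_disjoint {ι : Type*} [Fintype ι] {T : ι → Finset (Fin n)}
    (hT : Pairwise fun i j => Disjoint (T i) (T j)) (x : Fin n → Bool) :
    ∏ i, walsh (T i) x = walsh (univ.biUnion T) x :=
  (prod_biUnion fun _ _ _ _ hij => hT hij).symm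

lemma walsh_sel (S T : Finset (Fin n)) (x y : Fin n → Bool) :
    walsh T (sel S x y) = walsh (T ∩ S) x * walsh (T \ S) y := by
  simp only [walsh, sel, apply_ite chi, prod_ite, filter_mem_eq_inter, sdiff_eq_filter]

lemma uexp_walsh (T : Finset (Fin n)) : uexp (walsh T) = if T = ∅ then 1 else 0 := by
  split_ifs with hT
  · simp only [hT, funext walsh_empty, uexp_const]
  obtain ⟨i, hi⟩ := nonempty_iff_ne_empty.2 hT
  have hwalsh : ∀ x : Fin n → Bool, walsh T x = ∏ j, if j ∈ T then chi (x j) else 1 := fun x => by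
    simp [walsh]
  have hsum : ∑ b, (if i ∈ T then chi b else 1) = 0 := by simp [hi, chi]
  simp only [uexp, hwalsh]
  rw [← Fintype.prod_sum fun j b => if j ∈ T then chi b else 1,
    prod_eq_zero (mem_univ i) hsum, zero_div]

lemma biasFn_walsh (S T : Finset (Fin n)) (x : Fin n → Bool) :
    biasFn S (walsh T) x = if T ⊆ S then walsh T x else 0 := by
  have hfactor : biasFn S (walsh T) x = walsh (T ∩ S) x * uexp (walsh (T \ S)) := by
    simp only [biasFn, walsh_sel, uexp, mul_sum, mul_div_assoc']
  simp only [hfactor, uexp_walsh, sdiff_eq_empty_iff_subset, mul_ite, mul_one, mul_zero]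
  exact if_ctx_congr Iff.rfl (fun hTS => by rw [inter_eq_left.2 hTS]) fun _ => rfl

lemma DependsOnlyOn.biasFn_eq {f : (Fin n → Bool) → ℝ} {S : Finset (Fin n)}
    (hf : DependsOnlyOn f S) (x : Fin n → Bool) : biasFn S f x = f x := by
  have hsel : ∀ y, f (sel S x y) = f x := fun y => hf _ _ fun j hj => by simp [sel, hj]
  simp only [biasFn, hsel, uexp_const]

/-- The polynomial on the cube `{±1}^n` with Walsh coefficients `a`. -/
noncomputable def walshSum (a : Finset (Fin n) → ℝ) (x : Fin n → Bool) : ℝ :=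
  ∑ T, a T * walsh T x

lemma walshSum_add (a b : Finset (Fin n) → ℝ) (x : Fin n → Bool) :
    walshSum (a + b) x = walshSum a x + walshSum b x := by
  simp [walshSum, add_mul, sum_add_distrib]

lemma walshSum_smul (c : ℝ) (a : Finset (Fin n) → ℝ) (x : Fin n → Bool) :
    walshSum (c • a) x = c * walshSum a x := by
  simp [walshSum, mul_sum, mul_assoc]

lemma walshSum_single (T : Finset (Fin n)) (c : ℝ) (x : Fin n → Bool) :
    walshSum (Pi.single T c) x = c * walsh T x := by
  simp [walshSum, Pi.single_apply]

lemma uexp_walshSum (a : Finset (Fin n) → ℝ) : uexp (walshSum a) = a ∅ := by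
  calc uexp (walshSum a) = ∑ T, a T * uexp (walsh T) := uexp_sum_const_mul univ a walsh
    _ = a ∅ := by simp [uexp_walsh]

lemma biasFn_walshSum (S : Finset (Fin n)) (a : Finset (Fin n) → ℝ) (x : Fin n → Bool) :
    biasFn S (walshSum a) x = walshSum ((Set.Iic S).indicator a) x := by
  calc biasFn S (walshSum a) x = ∑ T, a T * biasFn S (walsh T) x :=
      uexp_sum_const_mul univ a fun T y => walsh T (sel S x y)
    _ = walshSum ((Set.Iic S).indicator a) x := by
      simp [walshSum, biasFn_walsh, Set.indicator_apply]

lemma DependsOnlyOn.le_walshSum_indicator {f : (Fin n → Bool) → ℝ} {S : Finset (Fin n)}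
    (hf : DependsOnlyOn f S) {a : Finset (Fin n) → ℝ} (hfa : ∀ x, f x ≤ walshSum a x)
    (x : Fin n → Bool) : f x ≤ walshSum ((Set.Iic S).indicator a) x := by
  calc f x = biasFn S f x := (hf.biasFn_eq x).symm
    _ ≤ biasFn S (walshSum a) x := uexp_mono fun y => hfa (sel S x y)
    _ = walshSum ((Set.Iic S).indicator a) x := biasFn_walshSum S a x

end Walsh

section Biased

variable {n : ℕ} {ε : ℝ} {μ : (Fin n → Bool) → ℝ}

lemma isBiased_uniformMass (hε : 0 ≤ ε) : IsBiased (uniformMass (Fin n → Bool)) ε := by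
  refine ⟨fun x => by simp [uniformMass], sum_uniformMass, fun T hT => ?_⟩
  calc |dExp (uniformMass (Fin n → Bool)) (walsh T)| = 0 := by
        rw [dExp_uniformMass, uexp_walsh, if_neg hT.ne_empty, abs_zero]
    _ ≤ ε := hε

lemma IsBiased.abs_dExp_walsh_le (hμ : IsBiased μ ε) {T : Finset (Fin n)} (hT : T.Nonempty) :
    |dExp μ (walsh T)| ≤ ε :=
  hμ.2.2 T hT

lemma IsBiased.abs_dExp_walsh_le_one (hμ : IsBiased μ ε) (T : Finset (Fin n)) :
    |dExp μ (walsh T)| ≤ 1 := by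
  calc |dExp μ (walsh T)| ≤ ∑ x, |μ x * walsh T x| := abs_sum_le_sum_abs _ _
    _ = 1 := by simp [abs_mul, abs_walsh, abs_of_nonneg (hμ.1 _), hμ.2.1]

lemma IsBiased.abs_dExp_prod_walsh_le {ι : Type*} [Fintype ι] (hε : 0 ≤ ε)
    (hμ : IsBiased μ (ε ^ Fintype.card ι)) {T : ι → Finset (Fin n)}
    (hT : Pairwise fun i j => Disjoint (T i) (T j)) :
    |dExp μ (fun x => ∏ i, walsh (T i) x)| ≤ ∏ i, if T i = ∅ then 1 else ε := by
  simp only [prod_walsh_of_pairwise_disjoint hT]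
  rcases le_total 1 ε with hε₁ | hε₁
  · refine (hμ.abs_dExp_walsh_le_one _).trans (one_le_prod fun i _ => ?_)
    split_ifs
    exacts [le_rfl, hε₁]
  rcases (univ.biUnion T).eq_empty_or_nonempty with hU | hU
  · have hempty : ∀ i, T i = ∅ := fun i =>
      subset_empty.1 (hU ▸ subset_biUnion_of_mem T (mem_univ i))
    simp only [hempty, if_true, prod_const_one]
    exact hμ.abs_dExp_walsh_le_one _
  · calc |dExp μ (walsh (univ.biUnion T))| ≤ ε ^ Fintype.card ι := hμ.abs_dExp_walsh_le hU
      _ = ∏ _i : ι, ε := by simp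
      _ ≤ ∏ i, if T i = ∅ then 1 else ε := by
        refine prod_le_prod (fun _ _ => hε) fun i _ => ?_
        split_ifs
        exacts [hε₁, le_rfl]

end Biased

section Cost

variable {n : ℕ} {ε : ℝ}

/-- The bound `a ∅ + ε * ∑ T ≠ ∅, |a T|` on the expectation of the polynomial `walshSum a` under
`ε`-biased distributions. The constant coefficient enters with its sign. -/
noncomputable def walshCost (ε : ℝ) (a : Finset (Fin n) → ℝ) : ℝ :=
  a ∅ + ε * ∑ T ∈ univ.erase ∅, |a T|

lemma walshCost_add_le (hε : 0 ≤ ε) (a b : Finset (Fin n) → ℝ) :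
    walshCost ε (a + b) ≤ walshCost ε a + walshCost ε b := by
  have htriangle : ∑ T ∈ univ.erase ∅, |(a + b) T| ≤
      ∑ T ∈ univ.erase ∅, |a T| + ∑ T ∈ univ.erase ∅, |b T| := by
    rw [← sum_add_distrib]
    exact sum_le_sum fun T _ => abs_add_le _ _
  have hmul := mul_le_mul_of_nonneg_left htriangle hε
  simp only [walshCost, Pi.add_apply] at hmul ⊢
  linarith

lemma walshCost_smul {c : ℝ} (hc : 0 ≤ c) (a : Finset (Fin n) → ℝ) :
    walshCost ε (c • a) = c * walshCost ε a := by
  simp only [walshCost, Pi.smul_apply, smul_eq_mul, abs_mul, abs_of_nonneg hc, ← mul_sum]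
  ring

lemma walshCost_zero : walshCost ε (0 : Finset (Fin n) → ℝ) = 0 := by
  simp [walshCost]

lemma walshCost_single_empty (c : ℝ) :
    walshCost ε (Pi.single (∅ : Finset (Fin n)) c) = c := by
  have hzero : ∑ T ∈ univ.erase ∅, |(Pi.single ∅ c : Finset (Fin n) → ℝ) T| = 0 :=
    sum_eq_zero fun T hT => by rw [Pi.single_eq_of_ne (ne_of_mem_erase hT), abs_zero]
  rw [walshCost, hzero, Pi.single_eq_same, mul_zero, add_zero]

lemma walshCost_single {T : Finset (Fin n)} (hT : T.Nonempty) (c : ℝ) :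
    walshCost ε (Pi.single T c) = ε * |c| := by
  have habs : ∀ U, |(Pi.single T c : Finset (Fin n) → ℝ) U| = if U = T then |c| else 0 := by
    intro U
    rw [Pi.single_apply, apply_ite abs, abs_zero]
  simp [walshCost, habs, hT.ne_empty, hT.ne_empty.symm]

lemma coeff_empty_le_walshCost (hε : 0 ≤ ε) (a : Finset (Fin n) → ℝ) : a ∅ ≤ walshCost ε a :=
  le_add_of_nonneg_right (mul_nonneg hε (sum_nonneg fun _ _ => abs_nonneg _))

lemma walshCost_indicator_le (hε : 0 ≤ ε) (S : Finset (Fin n)) (a : Finset (Fin n) → ℝ) :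
    walshCost ε ((Set.Iic S).indicator a) ≤ walshCost ε a := by
  have hle : ∀ T, |(Set.Iic S).indicator a T| ≤ |a T| := fun T => by
    simpa only [Real.norm_eq_abs] using norm_indicator_le_norm_self a T
  have hempty : (Set.Iic S).indicator a ∅ = a ∅ := Set.indicator_of_mem (empty_subset S) a
  rw [walshCost, walshCost, hempty]
  gcongr a ∅ + ε * ∑ T ∈ _, ?_
  exact hle _

lemma walshCost_eq_sum_of_nonneg {a : Finset (Fin n) → ℝ} (ha : 0 ≤ a ∅) :
    walshCost ε a = ∑ T, (if T = ∅ then 1 else ε) * |a T| := by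
  rw [← add_sum_erase univ _ (mem_univ ∅), if_pos rfl, one_mul, abs_of_nonneg ha, walshCost,
    mul_sum]
  congr 1
  exact sum_congr rfl fun T hT => by rw [if_neg (ne_of_mem_erase hT)]

lemma isBiased_of_forall_dExp_le_walshCost {μ : (Fin n → Bool) → ℝ}
    (h : ∀ f a, (∀ x, f x ≤ walshSum a x) → dExp μ f ≤ walshCost ε a) : IsBiased μ ε := by
  have hsingle : ∀ T c, c * dExp μ (walsh T) ≤ walshCost ε (Pi.single T c) := fun T c => by
    simpa [dExp, walshSum_single, mul_sum, mul_left_comm] using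
      h (walshSum (Pi.single T c)) (Pi.single T c) fun _ => le_rfl
  refine ⟨fun x => ?_, ?_, fun T hT => ?_⟩
  · have hneg : -μ x ≤ walshCost ε (0 : Finset (Fin n) → ℝ) := by
      refine le_of_eq_of_le ?_ (h (-Pi.single x 1) 0 fun y => ?_)
      · simp [dExp, Pi.single_apply]
      · rw [Pi.neg_apply, Pi.single_apply]
        split_ifs <;> simp [walshSum]
    rw [walshCost_zero] at hneg
    linarith
  · have hupper := hsingle ∅ 1
    have hlower := hsingle ∅ (-1)
    rw [walshCost_single_empty] at hupper hlower
    simp only [dExp, walsh_empty, mul_one] at hupper hlower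
    linarith
  · have hupper := hsingle T 1
    have hlower := hsingle T (-1)
    rw [walshCost_single hT] at hupper hlower
    simp only [abs_neg, abs_one, mul_one] at hupper hlower
    change |dExp μ (walsh T)| ≤ ε
    exact abs_le.2 ⟨by linarith, by linarith⟩

end Cost

section Duality

variable {n : ℕ} {ε : ℝ}

lemma exists_linearMap_eq_and_le_of_sublinear {E : Type*} [AddCommGroup E] [Module ℝ E] (N : E → ℝ)
    (hsmul : ∀ c : ℝ, 0 < c → ∀ x, N (c • x) = c * N x)
    (hadd : ∀ x y, N (x + y) ≤ N x + N y) (x : E) :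
    ∃ g : E →ₗ[ℝ] ℝ, g x = N x ∧ ∀ y, g y ≤ N y := by
  have hzero : N 0 = 0 := by
    have htwo := hsmul 2 two_pos 0
    rw [smul_zero] at htwo
    linarith
  have hwell : ∀ c : ℝ, c • x = 0 → (RingHom.id ℝ) c • N x = 0 := fun c hc => by
    rcases smul_eq_zero.1 hc with rfl | rfl <;> simp [hzero]
  have hspan : ∀ c : ℝ, c * N x ≤ N (c • x) := fun c => by
    rcases lt_trichotomy c 0 with hc | rfl | hc
    · have hsum := hadd (c • x) (-c • x)
      rw [neg_smul, add_neg_cancel, hzero, ← neg_smul, hsmul _ (neg_pos.2 hc)] at hsum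
      linarith
    · simp [hzero]
    · rw [hsmul c hc]
  obtain ⟨g, hgx, hgN⟩ := exists_extension_of_le_sublinear
    (LinearPMap.mkSpanSingleton' (σ := RingHom.id ℝ) x (N x) hwell) N hsmul hadd <| by
      rintro ⟨y, hy⟩
      obtain ⟨c, rfl⟩ := Submodule.mem_span_singleton.1 hy
      rw [LinearPMap.mkSpanSingleton'_apply]
      exact hspan c
  refine ⟨g, ?_, hgN⟩
  rw [hgx ⟨x, Submodule.mem_span_singleton_self x⟩]
  exact LinearPMap.mkSpanSingleton'_apply_self _ _ _ _

/-- The infimal `walshCost` of a polynomial lying above `f` on the cube. It is the value of the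
linear program dual to maximizing the expectation of `f` over `ε`-biased distributions. -/
noncomputable def majorantCost (ε : ℝ) (f : (Fin n → Bool) → ℝ) : ℝ :=
  sInf (walshCost ε '' {a | ∀ x, f x ≤ walshSum a x})

lemma majorantCost_le (hε : 0 ≤ ε) {f : (Fin n → Bool) → ℝ} {a : Finset (Fin n) → ℝ}
    (hfa : ∀ x, f x ≤ walshSum a x) : majorantCost ε f ≤ walshCost ε a := by
  refine csInf_le ⟨uexp f, ?_⟩ ⟨a, hfa, rfl⟩
  rintro _ ⟨b, hfb, rfl⟩
  calc uexp f ≤ uexp (walshSum b) := uexp_mono hfb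
    _ = b ∅ := uexp_walshSum b
    _ ≤ walshCost ε b := coeff_empty_le_walshCost hε b

lemma nonempty_walshCost_image_majorants (ε : ℝ) (f : (Fin n → Bool) → ℝ) :
    (walshCost ε '' {a | ∀ x, f x ≤ walshSum a x}).Nonempty := by
  refine ⟨_, Pi.single ∅ (∑ y, |f y|), fun x => ?_, rfl⟩
  rw [walshSum_single, walsh_empty, mul_one]
  exact (le_abs_self _).trans
    (single_le_sum (f := fun y => |f y|) (fun _ _ => abs_nonneg _) (mem_univ x))

lemma exists_majorant_walshCost_lt {f : (Fin n → Bool) → ℝ} {c : ℝ} (hc : majorantCost ε f < c) :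
    ∃ a : Finset (Fin n) → ℝ, (∀ x, f x ≤ walshSum a x) ∧ walshCost ε a < c := by
  obtain ⟨_, ⟨a, hfa, rfl⟩, hac⟩ :=
    exists_lt_of_csInf_lt (nonempty_walshCost_image_majorants ε f) hc
  exact ⟨a, hfa, hac⟩

lemma majorantCost_add_le (hε : 0 ≤ ε) (f g : (Fin n → Bool) → ℝ) :
    majorantCost ε (f + g) ≤ majorantCost ε f + majorantCost ε g := by
  refine le_of_forall_pos_le_add fun η hη => ?_
  obtain ⟨a, hfa, ha⟩ := exists_majorant_walshCost_lt (lt_add_of_pos_right (majorantCost ε f)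
    (half_pos hη))
  obtain ⟨b, hgb, hb⟩ := exists_majorant_walshCost_lt (lt_add_of_pos_right (majorantCost ε g)
    (half_pos hη))
  have hfg : majorantCost ε (f + g) ≤ walshCost ε (a + b) := majorantCost_le hε fun x => by
    rw [walshSum_add]
    exact add_le_add (hfa x) (hgb x)
  linarith [walshCost_add_le hε a b]

lemma majorantCost_smul_le (hε : 0 ≤ ε) {c : ℝ} (hc : 0 < c) (f : (Fin n → Bool) → ℝ) :
    majorantCost ε (c • f) ≤ c * majorantCost ε f := by
  rw [← div_le_iff₀' hc]
  refine le_csInf (nonempty_walshCost_image_majorants ε f) ?_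
  rintro _ ⟨a, hfa, rfl⟩
  rw [div_le_iff₀' hc, ← walshCost_smul hc.le]
  refine majorantCost_le hε fun x => ?_
  rw [walshSum_smul]
  exact mul_le_mul_of_nonneg_left (hfa x) hc.le

lemma majorantCost_smul (hε : 0 ≤ ε) {c : ℝ} (hc : 0 < c) (f : (Fin n → Bool) → ℝ) :
    majorantCost ε (c • f) = c * majorantCost ε f := by
  refine le_antisymm (majorantCost_smul_le hε hc f) ?_
  have hinv := majorantCost_smul_le hε (inv_pos.2 hc) (c • f)
  rwa [inv_smul_smul₀ hc.ne', le_inv_mul_iff₀ hc] at hinv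

theorem exists_isBiased_dExp_eq_majorantCost (hε : 0 ≤ ε) (f : (Fin n → Bool) → ℝ) :
    ∃ μ, IsBiased μ ε ∧ dExp μ f = majorantCost ε f := by
  obtain ⟨g, hgf, hg⟩ := exists_linearMap_eq_and_le_of_sublinear (majorantCost ε)
    (fun _ hc => majorantCost_smul hε hc) (majorantCost_add_le hε) f
  have hrepr : ∀ h, dExp (fun x => g (Pi.single x 1)) h = g h := fun h => by
    simp_rw [dExp, mul_comm, ← smul_eq_mul (a := h _), ← map_smul, ← map_sum]
    congr 1
    ext y
    simp [Pi.single_apply]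
  refine ⟨fun x => g (Pi.single x 1), ?_, (hrepr f).trans hgf⟩
  refine isBiased_of_forall_dExp_le_walshCost fun h a hha => ?_
  rw [hrepr]
  exact (hg h).trans (majorantCost_le hε hha)

lemma DependsOnlyOn.exists_majorant {f : (Fin n → Bool) → ℝ} {S : Finset (Fin n)}
    (hf : DependsOnlyOn f S) (hε : 0 ≤ ε) {c c' : ℝ} (hc : c < c')
    (hfc : ∀ μ, IsBiased μ ε → dExp μ f ≤ c) :
    ∃ a : Finset (Fin n) → ℝ,
      (∀ x, f x ≤ walshSum a x) ∧ Function.support a ⊆ Set.Iic S ∧ walshCost ε a ≤ c' := by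
  obtain ⟨μ, hμ, hμf⟩ := exists_isBiased_dExp_eq_majorantCost hε f
  obtain ⟨a, hfa, ha⟩ := exists_majorant_walshCost_lt ((hμf ▸ hfc μ hμ).trans_lt hc)
  exact ⟨(Set.Iic S).indicator a, hf.le_walshSum_indicator hfa, Set.support_indicator_subset,
    (walshCost_indicator_le hε S a).trans ha.le⟩

end Duality

section Product

variable {n : ℕ} {ε : ℝ} {ι : Type*} [Fintype ι] {S : ι → Finset (Fin n)}
  {μ : (Fin n → Bool) → ℝ}

lemma IsBiased.dExp_prod_walshSum_le (hε : 0 ≤ ε) (hμ : IsBiased μ (ε ^ Fintype.card ι))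
    (hS : Pairwise fun i j => Disjoint (S i) (S j)) {a : ι → Finset (Fin n) → ℝ}
    (ha : ∀ i, Function.support (a i) ⊆ Set.Iic (S i)) (ha₀ : ∀ i, 0 ≤ a i ∅) :
    dExp μ (fun x => ∏ i, walshSum (a i) x) ≤ ∏ i, walshCost ε (a i) := by
  classical
  have hterm : ∀ T : ι → Finset (Fin n),
      (∏ i, a i (T i)) * dExp μ (fun x => ∏ i, walsh (T i) x) ≤
        ∏ i, (if T i = ∅ then 1 else ε) * |a i (T i)| := fun T => by
    by_cases hT : ∀ i, a i (T i) ≠ 0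
    · have hdisj : Pairwise fun i j => Disjoint (T i) (T j) := fun i j hij =>
        (hS hij).mono (ha i (hT i)) (ha j (hT j))
      rw [prod_mul_distrib, ← abs_prod, mul_comm (∏ i, ite _ _ _)]
      refine (le_abs_self _).trans ?_
      rw [abs_mul]
      exact mul_le_mul_of_nonneg_left (hμ.abs_dExp_prod_walsh_le hε hdisj) (abs_nonneg _)
    · push Not at hT
      obtain ⟨i, hi⟩ := hT
      rw [prod_eq_zero (mem_univ i) hi, zero_mul, prod_eq_zero (mem_univ i) (by rw [hi]; simp)]
  calc dExp μ (fun x => ∏ i, walshSum (a i) x)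
      = ∑ T : ι → Finset (Fin n), (∏ i, a i (T i)) * dExp μ (fun x => ∏ i, walsh (T i) x) := by
        simp only [walshSum, Fintype.prod_sum, prod_mul_distrib, dExp_sum_const_mul]
    _ ≤ ∑ T : ι → Finset (Fin n), ∏ i, (if T i = ∅ then 1 else ε) * |a i (T i)| :=
        sum_le_sum fun T _ => hterm T
    _ = ∏ i, walshCost ε (a i) := by
        simp only [walshCost_eq_sum_of_nonneg (ha₀ _), Fintype.prod_sum]

theorem IsBiased.dExp_prod_le_prod (hε : 0 ≤ ε) (hμ : IsBiased μ (ε ^ Fintype.card ι))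
    (hS : Pairwise fun i j => Disjoint (S i) (S j)) {G : ι → (Fin n → Bool) → ℝ}
    (hG : ∀ i x, 0 ≤ G i x) (hdep : ∀ i, DependsOnlyOn (G i) (S i)) {c : ι → ℝ}
    (hc : ∀ i, ∀ ν, IsBiased ν ε → dExp ν (G i) ≤ c i) :
    dExp μ (fun x => ∏ i, G i x) ≤ ∏ i, c i := by
  have hperturb : ∀ η : ℝ, 0 < η → dExp μ (fun x => ∏ i, G i x) ≤ ∏ i, (c i + η) := fun η hη => by
    choose a hGa hsupp hcost using fun i =>
      (hdep i).exists_majorant hε (lt_add_of_pos_right (c i) hη) (hc i)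
    have ha₀ : ∀ i, 0 ≤ a i ∅ := fun i => by
      rw [← uexp_walshSum (a i), ← uexp_const (α := Fin n → Bool) 0]
      exact uexp_mono fun x => (hG i x).trans (hGa i x)
    calc dExp μ (fun x => ∏ i, G i x)
        ≤ dExp μ (fun x => ∏ i, walshSum (a i) x) :=
          dExp_mono hμ.1 fun x => prod_le_prod (fun i _ => hG i x) fun i _ => hGa i x
      _ ≤ ∏ i, walshCost ε (a i) := hμ.dExp_prod_walshSum_le hε hS hsupp ha₀
      _ ≤ ∏ i, (c i + η) := prod_le_prod
          (fun i _ => (ha₀ i).trans (coeff_empty_le_walshCost hε (a i))) fun i _ => hcost i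
  have hcont : Continuous fun η : ℝ => ∏ i, (c i + η) := by fun_prop
  have hlim : Filter.Tendsto (fun η : ℝ => ∏ i, (c i + η)) (nhdsWithin 0 (Set.Ioi 0))
      (nhds (∏ i, c i)) := by
    simpa using (hcont.tendsto 0).mono_left nhdsWithin_le_nhds
  exact ge_of_tendsto hlim (Filter.eventually_of_mem self_mem_nhdsWithin hperturb)

end Product

section Interpolation

variable {ι : Type*} [Fintype ι]

/-- The coefficient of the vertex `s` of the cube `{±1}^ι` when a multilinear function is
interpolated at `y` from its values at the vertices. For `y ∈ [-1, 1]^ι` it is the probability of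
`s` under the product distribution on the cube with mean `y`. -/
noncomputable def vertexWeight (s : ι → Bool) (y : ι → ℝ) : ℝ :=
  ∏ i, (1 + chi (s i) * y i) / 2

variable [DecidableEq ι]

lemma sum_vertexWeight (y : ι → ℝ) : ∑ s, vertexWeight s y = 1 := by
  simp only [vertexWeight]
  rw [← Fintype.prod_sum fun i b => (1 + chi b * y i) / 2]
  refine prod_eq_one fun i _ => ?_
  rw [Fintype.sum_bool]
  simp only [chi, if_true, Bool.false_eq_true, if_false]
  ring

lemma sum_prod_chi_mul_vertexWeight (A : Finset ι) (y : ι → ℝ) :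
    ∑ s, (∏ i ∈ A, chi (s i)) * vertexWeight s y = ∏ i ∈ A, y i := by
  have hextend : ∀ z : ι → ℝ, ∏ i ∈ A, z i = ∏ i, if i ∈ A then z i else 1 := fun z => by simp
  simp only [hextend, vertexWeight, ← prod_mul_distrib]
  rw [← Fintype.prod_sum fun i b => (if i ∈ A then chi b else 1) * ((1 + chi b * y i) / 2)]
  refine prod_congr rfl fun i _ => ?_
  rw [Fintype.sum_bool]
  simp only [chi, if_true, Bool.false_eq_true, if_false]
  split_ifs <;> ring

lemma multilinear_eq_sum_vertexWeight {H : (ι → ℝ) → ℝ} {c : Finset ι → ℝ}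
    (hH : ∀ y, H y = ∑ A, c A * ∏ i ∈ A, y i) (y : ι → ℝ) :
    H y = ∑ s : ι → Bool, H (fun i => chi (s i)) * vertexWeight s y := by
  simp only [hH, ← sum_prod_chi_mul_vertexWeight _ y, mul_sum, sum_mul, mul_assoc]
  exact sum_comm

end Interpolation

lemma abs_sum_mul_sub_sum_mul_le {κ : Type*} {t : Finset κ} {h p u q : κ → ℝ}
    (hh : ∀ s ∈ t, |h s| ≤ 1) (hpq : ∀ s ∈ t, p s ≤ q s) (huq : ∀ s ∈ t, u s ≤ q s) :
    |∑ s ∈ t, h s * p s - ∑ s ∈ t, h s * u s| ≤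
      (∑ s ∈ t, q s - ∑ s ∈ t, p s) + (∑ s ∈ t, q s - ∑ s ∈ t, u s) := by
  simp only [← sum_sub_distrib, ← sum_add_distrib]
  refine (abs_sum_le_sum_abs _ _).trans (sum_le_sum fun s hs => ?_)
  calc |h s * p s - h s * u s| = |h s| * |p s - u s| := by rw [← mul_sub, abs_mul]
    _ ≤ |p s - u s| := mul_le_of_le_one_left (abs_nonneg _) (hh s hs)
    _ ≤ (q s - p s) + (q s - u s) :=
      abs_le.2 ⟨by linarith [huq s hs], by linarith [hpq s hs]⟩

lemma one_add_pow_sub_one_le {x : ℝ} (hx₀ : 0 ≤ x) (hx₁ : x ≤ 1) (k : ℕ) :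
    (1 + x) ^ k - 1 ≤ (2 ^ k - 1) * x := by
  induction k with
  | zero => simp
  | succ k ih =>
    have hpow : (0 : ℝ) ≤ 2 ^ k - 1 := sub_nonneg.2 (one_le_pow₀ one_le_two)
    calc (1 + x) ^ (k + 1) - 1 = (1 + x) * ((1 + x) ^ k - 1) + x := by ring
      _ ≤ (1 + x) * ((2 ^ k - 1) * x) + x := by gcongr
      _ ≤ 2 * ((2 ^ k - 1) * x) + x := by gcongr; linarith
      _ = (2 ^ (k + 1) - 1) * x := by ring

lemma two_mul_one_add_pow_sub_one_le {x : ℝ} (hx₀ : 0 ≤ x) (hx₁ : x ≤ 1) (k : ℕ) :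
    2 * ((1 + x) ^ k - 1) ≤ 16 ^ k * (2 * x) := by
  have hpow : (2 : ℝ) ^ k - 1 ≤ 16 ^ k :=
    (sub_le_self _ zero_le_one).trans (pow_le_pow_left₀ zero_le_two (by norm_num) k)
  calc 2 * ((1 + x) ^ k - 1) ≤ 2 * ((2 ^ k - 1) * x) := by
        gcongr
        exact one_add_pow_sub_one_le hx₀ hx₁ k
    _ ≤ 2 * (16 ^ k * x) := by gcongr
    _ = 16 ^ k * (2 * x) := by ring

section XorLemma

variable {ι : Type*} [Fintype ι]

section Weights

variable {α : Type*} [Fintype α] {μ : α → ℝ} [DecidableEq ι]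

lemma dExp_multilinear_eq {H : (ι → ℝ) → ℝ} {c : Finset ι → ℝ}
    (hH : ∀ y, H y = ∑ A, c A * ∏ i ∈ A, y i) (F : ι → α → ℝ) :
    dExp μ (fun x => H fun i => F i x) = ∑ s : ι → Bool,
      H (fun i => chi (s i)) * dExp μ (fun x => vertexWeight s fun i => F i x) := by
  rw [← dExp_sum_const_mul]
  exact congrArg (dExp μ) (funext fun x => multilinear_eq_sum_vertexWeight hH _)

lemma sum_dExp_vertexWeight (hμ : ∑ x, μ x = 1) (F : ι → α → ℝ) :
    ∑ s : ι → Bool, dExp μ (fun x => vertexWeight s fun i => F i x) = 1 := by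
  simp only [dExp]
  rw [sum_comm]
  simp only [← mul_sum, sum_vertexWeight, mul_one, hμ]

lemma sum_prod_half_one_add_chi_mul_add (m δ : ι → ℝ) :
    ∑ s : ι → Bool, ∏ i, (1 + chi (s i) * m i + δ i) / 2 = ∏ i, (1 + δ i) := by
  rw [← Fintype.prod_sum fun i b => (1 + chi b * m i + δ i) / 2]
  refine prod_congr rfl fun i _ => ?_
  rw [Fintype.sum_bool]
  simp only [chi, if_true, Bool.false_eq_true, if_false]
  ring

end Weights

lemma dExp_half_one_add_chi_mul_le {α : Type*} [Fintype α] {μ f : α → ℝ} {δ : ℝ}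
    (hμ : ∑ x, μ x = 1) (hf : |dExp μ f - uexp f| ≤ δ) (b : Bool) :
    dExp μ (fun x => (1 + chi b * f x) / 2) ≤ (1 + chi b * uexp f + δ) / 2 := by
  have haffine : dExp μ (fun x => (1 + chi b * f x) / 2) = 1 / 2 + chi b / 2 * dExp μ f := by
    rw [← dExp_const_add_const_mul hμ]
    exact congrArg (dExp μ) (funext fun x => by ring)
  have herror : chi b * (dExp μ f - uexp f) ≤ δ := by
    refine (le_abs_self _).trans ?_
    rwa [abs_mul, abs_chi, one_mul]
  rw [haffine]
  linarith

variable {n : ℕ} {ε : ℝ} {μ : (Fin n → Bool) → ℝ}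

lemma IsBiased.dExp_vertexWeight_le (hε : 0 ≤ ε) (hμ : IsBiased μ (ε ^ Fintype.card ι))
    {F : ι → (Fin n → Bool) → ℝ} (hrange : ∀ i x, |F i x| ≤ 1) {S : ι → Finset (Fin n)}
    (hS : Pairwise fun i j => Disjoint (S i) (S j)) (hdep : ∀ i, DependsOnlyOn (F i) (S i))
    {δ : ι → ℝ} (hfool : ∀ i, ∀ ν, IsBiased ν ε → |dExp ν (F i) - uexp (F i)| ≤ δ i)
    (s : ι → Bool) :
    dExp μ (fun x => vertexWeight s fun i => F i x) ≤
      ∏ i, (1 + chi (s i) * uexp (F i) + δ i) / 2 := by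
  refine hμ.dExp_prod_le_prod hε hS (G := fun i x => (1 + chi (s i) * F i x) / 2)
    (fun i x => ?_) (fun i x y hxy => by simp only [hdep i x y hxy])
    fun i ν hν => dExp_half_one_add_chi_mul_le hν.2.1 (hfool i ν hν) (s i)
  have habs : |chi (s i) * F i x| ≤ 1 := by
    rw [abs_mul, abs_chi, one_mul]
    exact hrange i x
  linarith [(abs_le.1 habs).1]

end XorLemma

theorem xor_lemma_small_bias_general {n : ℕ} {ι : Type*} [Fintype ι] {ε : ℝ} (hε : 0 ≤ ε)
    {δ : ι → ℝ} {F : ι → (Fin n → Bool) → ℝ} (hrange : ∀ i x, |F i x| ≤ 1)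
    {S : ι → Finset (Fin n)} (hS : Pairwise fun i j => Disjoint (S i) (S j))
    (hdep : ∀ i, DependsOnlyOn (F i) (S i))
    (hfool : ∀ i, ∀ μ, IsBiased μ ε → |dExp μ (F i) - uexp (F i)| ≤ δ i)
    {H : (ι → ℝ) → ℝ} (hH : ∃ c : Finset ι → ℝ, ∀ y, H y = ∑ A, c A * ∏ i ∈ A, y i)
    (hHrange : ∀ y : ι → ℝ, (∀ i, |y i| ≤ 1) → |H y| ≤ 1)
    {μ : (Fin n → Bool) → ℝ} (hμ : IsBiased μ (ε ^ Fintype.card ι)) :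
    |dExp μ (fun x => H fun i => F i x) - uexp (fun x => H fun i => F i x)| ≤
      2 * (∏ i, (1 + δ i) - 1) := by
  classical
  obtain ⟨c, hc⟩ := hH
  have huniform := isBiased_uniformMass (n := n) (pow_nonneg hε (Fintype.card ι))
  have hdist := abs_sum_mul_sub_sum_mul_le (t := univ)
    (fun s _ => hHrange (fun i => chi (s i)) fun i => (abs_chi _).le)
    (fun s _ => hμ.dExp_vertexWeight_le hε hrange hS hdep hfool s)
    (fun s _ => huniform.dExp_vertexWeight_le hε hrange hS hdep hfool s)
  rwa [sum_dExp_vertexWeight hμ.2.1, sum_dExp_vertexWeight huniform.2.1,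
    sum_prod_half_one_add_chi_mul_add, ← two_mul, ← dExp_multilinear_eq hc,
    ← dExp_multilinear_eq hc, dExp_uniformMass] at hdist

/-- XOR lemma for small-biased distributions: if each of the
`[-1,1]`-valued functions `F i` (on pairwise disjoint sets of variables) is `δ`-fooled
by every `ε`-biased distribution and `H` is multilinear mapping `[-1,1]^k` to
`[-1,1]`, then `H(F₁, …, F_k)` is `16^k · 2δ`-fooled by every `ε^k`-biased
distribution. -/
theorem xor_lemma_small_bias
    (n k : ℕ) (ε δ : ℝ) (hε : 0 < ε) (hεδ : ε < δ) (hδ : δ ≤ 1)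
    (F : Fin k → (Fin n → Bool) → ℝ)
    (hrange : ∀ i x, |F i x| ≤ 1)
    (S : Fin k → Finset (Fin n))
    (hdisj : ∀ i j, i ≠ j → Disjoint (S i) (S j))
    (hdep : ∀ i, DependsOnlyOn (F i) (S i))
    (hfool : ∀ i, ∀ μ : (Fin n → Bool) → ℝ, IsBiased μ ε →
      |dExp μ (F i) - uexp (F i)| ≤ δ)
    (H : (Fin k → ℝ) → ℝ)
    (hH : ∃ c : Finset (Fin k) → ℝ, ∀ y, H y = ∑ A : Finset (Fin k), c A * ∏ i ∈ A, y i)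
    (hHrange : ∀ y : Fin k → ℝ, (∀ i, |y i| ≤ 1) → |H y| ≤ 1) :
    ∀ μ : (Fin n → Bool) → ℝ, IsBiased μ (ε ^ k) →
      |dExp μ (fun x => H (fun i => F i x)) -
          uexp (fun x => H (fun i => F i x))| ≤ 16 ^ k * (2 * δ) := by
  refine fun μ hμ => le_trans ?_ (two_mul_one_add_pow_sub_one_le (hε.trans hεδ).le hδ k)
  simpa only [prod_const, card_univ, Fintype.card_fin] using xor_lemma_small_bias_general hε.le
    hrange hdisj hdep hfool hH hHrange (by rwa [Fintype.card_fin] : IsBiased μ _)
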